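/- Let k be a field, n ≥ 1, and let H be a subgroup of GL_n(k). Equip pgl_n(k) := M_n(k)/(k·I_n), the quotient of the space of n×n matrices by the line of scalar matrices, with the action induced by conjugation, g·(X + k·I_n) = gXg^{-1} + k·I_n. If pgl_n(k) is a semisimple H-module, then the natural module k^n (with H acting by matrix multiplication) is a semisimple H-module. -/

import Mathlib

def IsSubrep {k S V : Type*} [CommRing k] [Group S] [AddCommGroup V] [Module k V]
    (ρ : Representation k S V) (p : Submodule k V) : Prop :=
  ∀ (s : S), ∀ v ∈ p, ρ s v ∈ p

def IsSemisimpleRep {k S V : Type*} [CommRing k] [Group S] [AddCommGroup V] [Module k V]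
    (ρ : Representation k S V) : Prop :=
  ∀ p : Submodule k V, IsSubrep ρ p → ∃ q : Submodule k V, IsSubrep ρ q ∧ IsCompl p q

variable (n : ℕ) (k : Type*) [Field k]

/-- The conjugation representation of `GL_n(k)` on the space of `n × n` matrices:
`g · X = g * X * g⁻¹`. -/
def glConjRep : Representation k (Matrix.GeneralLinearGroup (Fin n) k)
    (Matrix (Fin n) (Fin n) k) where
  toFun g :=
    { toFun := fun X => (g : Matrix (Fin n) (Fin n) k) * X *
        ((g⁻¹ : Matrix.GeneralLinearGroup (Fin n) k) : Matrix (Fin n) (Fin n) k)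
      map_add' := by intro X Y; simp [mul_add, add_mul]
      map_smul' := by intro c X; simp [mul_smul_comm, smul_mul_assoc] }
  map_one' := by
    refine LinearMap.ext fun X => ?_
    simp
  map_mul' g h := by
    refine LinearMap.ext fun X => ?_
    simp [Units.val_mul, mul_inv_rev, mul_assoc, Module.End.mul_apply]

/-- The conjugation representation of a subgroup `H` of `GL_n(k)` on `M_n(k)`. -/
def matConjRep (H : Subgroup (Matrix.GeneralLinearGroup (Fin n) k)) :
    Representation k H (Matrix (Fin n) (Fin n) k) :=
  (glConjRep n k).comp H.subtype

/-- The natural representation of a subgroup `H` of `GL_n(k)` on `k^n`. -/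
def naturalRep (H : Subgroup (Matrix.GeneralLinearGroup (Fin n) k)) :
    Representation k H (Fin n → k) where
  toFun h := Matrix.mulVecLin
    ((h : Matrix.GeneralLinearGroup (Fin n) k) : Matrix (Fin n) (Fin n) k)
  map_one' := by simp [Module.End.one_eq_id]
  map_mul' g h := by
    simp [Units.val_mul, Matrix.mulVecLin_mul, Module.End.mul_eq_comp]

/-- The line of scalar matrices `k · I_n` is stable under conjugation by `GL_n(k)`. -/
theorem scalarLine_isSubrep_gl :
    IsSubrep (glConjRep n k)
      (Submodule.span k {(1 : Matrix (Fin n) (Fin n) k)}) := by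
  intro s v hv
  rw [Submodule.mem_span_singleton] at hv ⊢
  obtain ⟨c, rfl⟩ := hv
  refine ⟨c, ?_⟩
  have hu : ((s : Matrix (Fin n) (Fin n) k)) *
      ((s⁻¹ : Matrix.GeneralLinearGroup (Fin n) k) : Matrix (Fin n) (Fin n) k) = 1 := by
    rw [← Units.val_mul, mul_inv_cancel, Units.val_one]
  show c • (1 : Matrix (Fin n) (Fin n) k) =
    (s : Matrix (Fin n) (Fin n) k) * (c • (1 : Matrix (Fin n) (Fin n) k)) *
      ((s⁻¹ : Matrix.GeneralLinearGroup (Fin n) k) : Matrix (Fin n) (Fin n) k)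
  rw [mul_smul_comm, smul_mul_assoc, mul_one, hu]

/-- The line of scalar matrices is stable under conjugation by any subgroup. -/
theorem scalarLine_isSubrep (H : Subgroup (Matrix.GeneralLinearGroup (Fin n) k)) :
    IsSubrep (matConjRep n k H)
      (Submodule.span k {(1 : Matrix (Fin n) (Fin n) k)}) :=
  fun s v hv => scalarLine_isSubrep_gl n k (s : Matrix.GeneralLinearGroup (Fin n) k) v hv

/-- The induced representation on a quotient by a stable submodule. -/
def quotRep {k S V : Type*} [CommRing k] [Group S] [AddCommGroup V] [Module k V]
    (ρ : Representation k S V) (N : Submodule k V) (hN : IsSubrep ρ N) :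
    Representation k S (V ⧸ N) where
  toFun s := N.mapQ N (ρ s) (fun v hv => hN s v hv)
  map_one' := by
    refine LinearMap.ext fun x => ?_
    obtain ⟨v, rfl⟩ := Submodule.Quotient.mk_surjective N x
    simp [Submodule.mapQ_apply]
  map_mul' s t := by
    refine LinearMap.ext fun x => ?_
    obtain ⟨v, rfl⟩ := Submodule.Quotient.mk_surjective N x
    simp [Submodule.mapQ_apply, Module.End.mul_apply]

/-! Let `φ : End V → W` be equivariant with kernel consisting of scalars, `W` semisimple, and let
`p ≤ V` be stable. Inside `End V` sits the stable submodule `Hom(V/p, p)`; it contains no nonzero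
scalar, so it embeds into `W` and hence has a stable complement `Q` in `End V`. The projections onto
`p` form a coset of `Hom(V/p, p)`, stable under conjugation. This coset meets `Q` in exactly one
point, which is therefore an equivariant projection onto `p`; its kernel is a stable complement. -/

open LinearMap Representation

section Linear

variable {R V W : Type*} [Ring R] [AddCommGroup V] [Module R V] [AddCommGroup W] [Module R W]

theorem isCompl_comap_of_isCompl_map {φ : V →ₗ[R] W} {p : Submodule R V}
    {q : Submodule R W} (hdisj : Disjoint p (ker φ)) (hq : IsCompl (p.map φ) q) :
    IsCompl p (q.comap φ) := by
  constructor
  · rw [Submodule.disjoint_def]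
    intro v hvp hvq
    have hφv : φ v = 0 :=
      Submodule.disjoint_def.1 hq.disjoint _ (Submodule.mem_map_of_mem hvp) hvq
    exact Submodule.disjoint_def.1 hdisj v hvp (mem_ker.2 hφv)
  · rw [Submodule.codisjoint_iff_exists_add_eq]
    intro v
    obtain ⟨_, y, ⟨u, hu, rfl⟩, hy, huy⟩ :=
      Submodule.codisjoint_iff_exists_add_eq.1 hq.codisjoint (φ v)
    refine ⟨u, v - u, hu, ?_, add_sub_cancel u v⟩
    rwa [Submodule.mem_comap, map_sub, ← huy, add_sub_cancel_left]

theorem isProj_projection {p q : Submodule R V} (hpq : IsCompl p q) :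
    IsProj p (p.projection q hpq) :=
  ⟨Submodule.projection_apply_mem hpq, fun _ => Submodule.projection_apply_of_mem_left hpq⟩

end Linear

section Stable

variable {R G V W : Type*} [CommRing R] [Group G] [AddCommGroup V] [Module R V]
  [AddCommGroup W] [Module R W] {ρ : Representation R G V} {σ : Representation R G W}
  {φ : V →ₗ[R] W}

theorem isIntertwiningMap_comp {U : Type*} [AddCommGroup U] [Module R U]
    {τ : Representation R G U} {ψ : W →ₗ[R] U} (hψ : σ.IsIntertwiningMap τ ψ)
    (hφ : ρ.IsIntertwiningMap σ φ) : ρ.IsIntertwiningMap τ (ψ ∘ₗ φ) := by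
  refine ⟨fun g v => ?_⟩
  rw [comp_apply, comp_apply, hφ.isIntertwining, hψ.isIntertwining]

theorem IsSubrep.map (hφ : ρ.IsIntertwiningMap σ φ) {p : Submodule R V} (hp : IsSubrep ρ p) :
    IsSubrep σ (p.map φ) := by
  rintro g _ ⟨v, hv, rfl⟩
  exact ⟨ρ g v, hp g v hv, hφ.isIntertwining g v⟩

theorem IsSubrep.comap (hφ : ρ.IsIntertwiningMap σ φ) {q : Submodule R W} (hq : IsSubrep σ q) :
    IsSubrep ρ (q.comap φ) := by
  intro g v hv
  rw [Submodule.mem_comap, hφ.isIntertwining]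
  exact hq g _ hv

theorem isSubrep_ker (hφ : ρ.IsIntertwiningMap σ φ) : IsSubrep ρ (ker φ) := by
  intro g v hv
  rw [mem_ker] at hv ⊢
  rw [hφ.isIntertwining, hv, map_zero]

theorem IsSemisimpleRep.exists_isCompl_of_disjoint_ker (hσ : IsSemisimpleRep σ)
    (hφ : ρ.IsIntertwiningMap σ φ) {p : Submodule R V} (hp : IsSubrep ρ p)
    (hdisj : Disjoint p (ker φ)) : ∃ q : Submodule R V, IsSubrep ρ q ∧ IsCompl p q := by
  obtain ⟨q, hq, hpq⟩ := hσ (p.map φ) (hp.map hφ)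
  exact ⟨q.comap φ, hq.comap hφ, isCompl_comap_of_isCompl_map hdisj hpq⟩

theorem isIntertwiningMap_mkQ {N : Submodule R V} (hN : IsSubrep ρ N) :
    ρ.IsIntertwiningMap (quotRep ρ N hN) N.mkQ :=
  ⟨fun _ _ => rfl⟩

end Stable

section HomQuotient

variable {R G V W : Type*} [CommRing R] [Group G] [AddCommGroup V] [Module R V]
  [AddCommGroup W] [Module R W] {ρ : Representation R G V} {σ : Representation R G W}
  {p : Submodule R V} {e f : Module.End R V}

/-- The copy of `Hom(V/p, p)` inside `End V`: the endomorphisms with image in `p` that vanish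
on `p`. -/
def homQuotient (p : Submodule R V) : Submodule R (Module.End R V) :=
  Submodule.compatibleMaps ⊤ p ⊓ Submodule.compatibleMaps p ⊥

theorem mem_homQuotient : f ∈ homQuotient p ↔ (∀ v, f v ∈ p) ∧ ∀ v ∈ p, f v = 0 :=
  and_congr ⟨fun h v => h (Submodule.mem_top (x := v)), fun h v _ => h v⟩ Iff.rfl

theorem IsSubrep.homQuotient (hp : IsSubrep ρ p) :
    IsSubrep (linHom ρ ρ) (homQuotient p) := by
  intro g f hf
  rw [mem_homQuotient] at hf ⊢
  refine ⟨fun v => hp g _ (hf.1 _), fun v hv => ?_⟩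
  rw [linHom_apply, comp_apply, comp_apply, hf.2 _ (hp g⁻¹ v hv), map_zero]

theorem sub_mem_homQuotient (he : IsProj p e) (hf : IsProj p f) : e - f ∈ homQuotient p := by
  refine mem_homQuotient.2 ⟨fun v => p.sub_mem (he.map_mem v) (hf.map_mem v), fun v hv => ?_⟩
  rw [LinearMap.sub_apply, he.map_id v hv, hf.map_id v hv, sub_self]

theorem isProj_sub_of_mem_homQuotient (he : IsProj p e) (hf : f ∈ homQuotient p) :
    IsProj p (e - f) := by
  rw [mem_homQuotient] at hf
  refine ⟨fun v => p.sub_mem (he.map_mem v) (hf.1 v), fun v hv => ?_⟩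
  rw [LinearMap.sub_apply, he.map_id v hv, hf.2 v hv, sub_zero]

theorem isProj_linHom (hp : IsSubrep ρ p) (he : IsProj p e) (g : G) :
    IsProj p (linHom ρ ρ g e) := by
  refine ⟨fun v => hp g _ (he.map_mem _), fun v hv => ?_⟩
  rw [linHom_apply, comp_apply, comp_apply, he.map_id _ (hp g⁻¹ v hv), self_inv_apply]

theorem eq_zero_of_mem_homQuotient_of_commute (he : IsProj p e) (hf : f ∈ homQuotient p)
    (hcomm : Commute e f) : f = 0 := by
  rw [mem_homQuotient] at hf
  ext v
  calc f v = e (f v) := (he.map_id _ (hf.1 v)).symm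
    _ = f (e v) := LinearMap.congr_fun hcomm.eq v
    _ = 0 := hf.2 _ (he.map_mem v)

theorem disjoint_homQuotient_span_one (he : IsProj p e) :
    Disjoint (homQuotient p) (Submodule.span R {1}) := by
  rw [Submodule.disjoint_def]
  intro f hf hscalar
  obtain ⟨c, rfl⟩ := Submodule.mem_span_singleton.1 hscalar
  exact eq_zero_of_mem_homQuotient_of_commute he hf ((Commute.one_right e).smul_right c)

theorem exists_isProj_isIntertwiningMap (hp : IsSubrep ρ p) (he : IsProj p e)
    {Q : Submodule R (Module.End R V)} (hQ : IsSubrep (linHom ρ ρ) Q)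
    (hcompl : IsCompl (homQuotient p) Q) :
    ∃ f : Module.End R V, IsProj p f ∧ ρ.IsIntertwiningMap ρ f := by
  obtain ⟨a, f, ha, hfQ, rfl⟩ :=
    Submodule.codisjoint_iff_exists_add_eq.1 hcompl.codisjoint e
  have hf : IsProj p f := by
    simpa only [add_sub_cancel_left] using isProj_sub_of_mem_homQuotient he ha
  have hinv (g : G) : linHom ρ ρ g f = f :=
    sub_eq_zero.1 <| Submodule.disjoint_def.1 hcompl.disjoint _
      (sub_mem_homQuotient (isProj_linHom hp hf g) hf) (Q.sub_mem (hQ g f hfQ) hfQ)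
  exact ⟨f, hf, (mem_linHom_invariants_iff_isIntertwining f).1 hinv⟩

theorem stmt_5_general [IsSemisimpleModule R V] {φ : Module.End R V →ₗ[R] W}
    (hφ : (linHom ρ ρ).IsIntertwiningMap σ φ) (hker : ker φ ≤ Submodule.span R {1})
    (hσ : IsSemisimpleRep σ) : IsSemisimpleRep ρ := by
  intro p hp
  obtain ⟨q, hpq⟩ := exists_isCompl p
  have he := isProj_projection hpq
  obtain ⟨Q, hQ, hcompl⟩ := hσ.exists_isCompl_of_disjoint_ker hφ hp.homQuotient
    ((disjoint_homQuotient_span_one he).mono_right hker)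
  obtain ⟨f, hf, hfρ⟩ := exists_isProj_isIntertwiningMap hp he hQ hcompl
  exact ⟨ker f, isSubrep_ker hfρ, hf.isCompl⟩

end HomQuotient

theorem isIntertwiningMap_toMatrix' (H : Subgroup (Matrix.GeneralLinearGroup (Fin n) k)) :
    (linHom (naturalRep n k H) (naturalRep n k H)).IsIntertwiningMap (matConjRep n k H)
      (toMatrix' : Module.End k (Fin n → k) ≃ₗ[k] Matrix (Fin n) (Fin n) k).toLinearMap := by
  have htoMatrix' (h : H) : toMatrix' (naturalRep n k H h) = (h.1 : Matrix (Fin n) (Fin n) k) :=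
    toMatrix'_toLin' _
  refine ⟨fun h f => ?_⟩
  calc toMatrix' (naturalRep n k H h ∘ₗ f ∘ₗ naturalRep n k H h⁻¹)
      = h.1 * (toMatrix' f * (h⁻¹).1) := by
        rw [toMatrix'_comp, toMatrix'_comp, htoMatrix', htoMatrix']
    _ = matConjRep n k H h (toMatrix' f) := (mul_assoc _ _ _).symm

theorem ker_mkQ_comp_toMatrix' :
    ker ((Submodule.span k {(1 : Matrix (Fin n) (Fin n) k)}).mkQ ∘ₗ
      (toMatrix' : Module.End k (Fin n → k) ≃ₗ[k] Matrix (Fin n) (Fin n) k).toLinearMap) =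
      Submodule.span k {1} := by
  rw [ker_comp, Submodule.ker_mkQ, Submodule.comap_equiv_eq_map_symm, Submodule.map_span,
    Set.image_singleton, toMatrix'_symm, LinearEquiv.coe_coe, Matrix.toLin'_one,
    Module.End.one_eq_id]

/-- if the `H`-module `pgl_n(k) = M_n(k)/(k·I_n)`, with the action
induced by conjugation, is semisimple, then the natural `H`-module `k^n` is
semisimple. -/
theorem stmt_5 {k : Type*} [Field k] {n : ℕ} (hn : 1 ≤ n)
    (H : Subgroup (Matrix.GeneralLinearGroup (Fin n) k))
    (hss : IsSemisimpleRep (quotRep (matConjRep n k H)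
      (Submodule.span k {(1 : Matrix (Fin n) (Fin n) k)})
      (scalarLine_isSubrep n k H))) :
    IsSemisimpleRep (naturalRep n k H) :=
  stmt_5_general (isIntertwiningMap_comp (isIntertwiningMap_mkQ _)
    (isIntertwiningMap_toMatrix' n k H)) (ker_mkQ_comp_toMatrix' n k).le hss
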